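/- (Proposition 1, α-block.) Fix M, K ∈ ℕ, observations a : Fin K → ℝ with a k > 0 for all k, feature vectors W : Fin K → (Fin M → ℝ), and β : Fin M → ℝ. For v, w : Fin M → ℝ write ⟨v,w⟩ = ∑ m, v m · w m. Then the log-likelihood L(α) = ∑ k, Real.log (ProbabilityTheory.gammaPDFReal (Real.exp ⟨α, W k⟩) (Real.exp (−⟨β, W k⟩)) (a k)) is differentiable at every α : Fin M → ℝ, and its m-th partial derivative at α equals ∑ k, (W k) m · Real.exp ⟨α, W k⟩ · (Real.log (a k) − ψ(Real.exp ⟨α, W k⟩) − ⟨β, W k⟩), where ψ(y) = deriv (fun z => Real.log (Real.Gamma z)) y. In matrix notation this gradient is Wᵀ( exp(Wα) ⊙ ( ln(a) − ψ(exp(Wα)) − Wβ ) ), where ⊙ is the Hadamard product. -/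

import Mathlib

open Finset

/-!
For fixed rate `r` and observation `x`, the log-density is affine in the shape `s` apart from the
term `-log Γ(s)`, so its derivative in `s` is `log r + log x - ψ(s)`. Composing with
`s = exp ⟨α, w⟩` multiplies this by `exp ⟨α, w⟩`, and the partial derivative of `⟨α, w⟩` in the
`m`-th coordinate is `w m`. A rate `exp (-⟨β, w⟩)` has logarithm `-⟨β, w⟩`.
-/

open ProbabilityTheory Topology

/-- The digamma function of a real variable, which Mathlib only has over `ℂ`. -/
local notation "ψ" => deriv (fun z : ℝ => Real.log (Real.Gamma z))

lemma log_gammaPDFReal {s r x : ℝ} (hs : 0 < s) (hr : 0 < r) (hx : 0 < x) :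
    Real.log (gammaPDFReal s r x) =
      s * Real.log r - Real.log (Real.Gamma s) + (s - 1) * Real.log x - r * x := by
  have rate_ne : r ^ s ≠ 0 := (Real.rpow_pos_of_pos hr s).ne'
  have power_ne : x ^ (s - 1) ≠ 0 := (Real.rpow_pos_of_pos hx (s - 1)).ne'
  have gamma_ne : Real.Gamma s ≠ 0 := (Real.Gamma_pos_of_pos hs).ne'
  rw [gammaPDFReal, if_pos hx.le,
    Real.log_mul (mul_ne_zero (div_ne_zero rate_ne gamma_ne) power_ne) (Real.exp_ne_zero _),
    Real.log_mul (div_ne_zero rate_ne gamma_ne) power_ne, Real.log_div rate_ne gamma_ne,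
    Real.log_rpow hr, Real.log_rpow hx, Real.log_exp]
  ring

lemma differentiableAt_log_Gamma {s : ℝ} (hs : ∀ m : ℕ, s ≠ -m) :
    DifferentiableAt ℝ (fun z : ℝ => Real.log (Real.Gamma z)) s :=
  (Real.differentiableAt_Gamma hs).log (Real.Gamma_ne_zero hs)

lemma hasDerivAt_log_gammaPDFReal_shape {s r x : ℝ} (hs : 0 < s) (hr : 0 < r) (hx : 0 < x) :
    HasDerivAt (fun z : ℝ => Real.log (gammaPDFReal z r x))
      (Real.log r + Real.log x - ψ s) s := by
  have not_pole (m : ℕ) : s ≠ -m := (hs.trans_le' (neg_nonpos.mpr m.cast_nonneg)).ne'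
  have log_density_eq : (fun z : ℝ => Real.log (gammaPDFReal z r x)) =ᶠ[𝓝 s] fun z =>
      z * Real.log r - Real.log (Real.Gamma z) + (z - 1) * Real.log x - r * x := by
    filter_upwards [lt_mem_nhds hs] with z hz using log_gammaPDFReal hz hr hx
  have deriv_explicit :=
    ((((hasDerivAt_id s).mul_const (Real.log r)).sub
      (differentiableAt_log_Gamma not_pole).hasDerivAt).add
      (((hasDerivAt_id s).sub_const 1).mul_const (Real.log x))).sub_const (r * x)
  exact (deriv_explicit.congr_of_eventuallyEq log_density_eq).congr_deriv (by ring)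

lemma hasFDerivAt_log_gammaPDFReal_exp {E : Type*} [NormedAddCommGroup E] [NormedSpace ℝ E]
    {f : E → ℝ} {f' : E →L[ℝ] ℝ} {y : E} {r x : ℝ} (hf : HasFDerivAt f f' y)
    (hr : 0 < r) (hx : 0 < x) :
    HasFDerivAt (fun z => Real.log (gammaPDFReal (Real.exp (f z)) r x))
      ((Real.exp (f y) * (Real.log r + Real.log x - ψ (Real.exp (f y)))) • f') y := by
  have deriv_shape := hasDerivAt_log_gammaPDFReal_shape (Real.exp_pos (f y)) hr hx
  refine (deriv_shape.comp_hasFDerivAt y hf.exp).congr_fderiv ?_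
  rw [smul_smul, mul_comm]

theorem gamma_loglik_gradient_alpha_block_general {ι κ : Type*} [Fintype ι] [DecidableEq ι]
    [Fintype κ] {a r : κ → ℝ} (ha : ∀ k, 0 < a k) (hr : ∀ k, 0 < r k) (W : κ → ι → ℝ)
    (α : ι → ℝ) :
    DifferentiableAt ℝ (fun α : ι → ℝ =>
        ∑ k, Real.log (gammaPDFReal (Real.exp (∑ i, α i * W k i)) (r k) (a k))) α ∧
      ∀ i, fderiv ℝ (fun α : ι → ℝ =>
          ∑ k, Real.log (gammaPDFReal (Real.exp (∑ i, α i * W k i)) (r k) (a k))) α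
          (Pi.single i 1) =
        ∑ k, W k i * Real.exp (∑ i, α i * W k i) *
          (Real.log (a k) - ψ (Real.exp (∑ i, α i * W k i)) + Real.log (r k)) := by
  let predictor (k : κ) : (ι → ℝ) →L[ℝ] ℝ :=
    LinearMap.toContinuousLinearMap (Fintype.linearCombination ℝ (W k))
  have predictor_single (k : κ) (i : ι) : predictor k (Pi.single i 1) = W k i :=
    (Fintype.linearCombination_apply_single ℝ (W k) i 1).trans (one_smul ℝ (W k i))
  have hasFDerivAt_loglik := HasFDerivAt.fun_sum (u := univ) fun k _ =>
    hasFDerivAt_log_gammaPDFReal_exp ((predictor k).hasFDerivAt (x := α)) (hr k) (ha k)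
  refine ⟨hasFDerivAt_loglik.differentiableAt, fun i => ?_⟩
  refine (DFunLike.congr_fun hasFDerivAt_loglik.fderiv (Pi.single i 1)).trans ?_
  rw [_root_.sum_apply]
  refine sum_congr rfl fun k _ => ?_
  have predictor_apply : predictor k α = ∑ i, α i * W k i := rfl
  rw [smul_apply, predictor_single, predictor_apply, smul_eq_mul]
  ring

/-- Proposition 1, α-block: the amplitude log-likelihood
`L(α) = ∑ k, log (gammaPDFReal (exp⟨α, W k⟩) (exp(−⟨β, W k⟩)) (a k))`
is differentiable at every `α`, and its `m`-th partial derivative at `α` equals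
`∑ k, (W k) m · exp⟨α, W k⟩ · (log (a k) − ψ(exp⟨α, W k⟩) − ⟨β, W k⟩)`, i.e. in matrix
notation `Wᵀ(exp(Wα) ⊙ (ln a − ψ(exp(Wα)) − Wβ))`. -/
theorem gamma_loglik_gradient_alpha_block
    (M K : ℕ) (a : Fin K → ℝ) (ha : ∀ k, 0 < a k)
    (W : Fin K → Fin M → ℝ) (β : Fin M → ℝ) :
    ∀ α : Fin M → ℝ,
      DifferentiableAt ℝ (fun α : Fin M → ℝ =>
          ∑ k, Real.log (ProbabilityTheory.gammaPDFReal
            (Real.exp (∑ m, α m * W k m)) (Real.exp (-(∑ m, β m * W k m))) (a k))) α ∧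
      ∀ m : Fin M,
        fderiv ℝ (fun α : Fin M → ℝ =>
            ∑ k, Real.log (ProbabilityTheory.gammaPDFReal
              (Real.exp (∑ m, α m * W k m)) (Real.exp (-(∑ m, β m * W k m))) (a k))) α
          (Pi.single m 1) =
        ∑ k, W k m * Real.exp (∑ m, α m * W k m) *
          (Real.log (a k) -
            deriv (fun z : ℝ => Real.log (Real.Gamma z)) (Real.exp (∑ m, α m * W k m)) -
            ∑ m, β m * W k m) := by
  intro α
  simpa only [Real.log_exp, ← sub_eq_add_neg] using
    gamma_loglik_gradient_alpha_block_general ha (fun k => Real.exp_pos (-∑ m, β m * W k m)) W α
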